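/- Let T be a tree with exactly k flexible vertices. If k = 3t for a nonnegative integer t, then T has at most 3^t maximum dissociation sets; if k = 3t + 1, then T has at most 3^{t−1}·2² maximum dissociation sets; and if k = 3t + 2, then T has at most 3^t·2 maximum dissociation sets. -/

import Mathlib

open SimpleGraph

/-- `l` is a (not necessarily induced) `k`-path in `G`: a list of `k` pairwise distinct
vertices in which consecutive vertices are adjacent. -/
def IsKPath {V : Type*} (G : SimpleGraph V) (k : ℕ) (l : List V) : Prop :=
  l.length = k ∧ l.Nodup ∧ l.Chain' G.Adj

/-- A `k`-matching in `G`: a finite set of pairwise vertex-disjoint `k`-paths. -/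
def IsKMatching {V : Type*} (G : SimpleGraph V) (k : ℕ) (M : Finset (List V)) : Prop :=
  (∀ l ∈ M, IsKPath G k l) ∧
    (M : Set (List V)).Pairwise fun l₁ l₂ => ∀ v ∈ l₁, v ∉ l₂

/-- The `k`-matching number `μ_k(G)`: the maximum cardinality of a `k`-matching. -/
noncomputable def kMatchNum {V : Type*} (G : SimpleGraph V) (k : ℕ) : ℕ :=
  sSup {n | ∃ M : Finset (List V), IsKMatching G k M ∧ M.card = n}

/-- A maximum `k`-matching: a `k`-matching of cardinality `μ_k(G)`. -/
def IsMaxKMatching {V : Type*} (G : SimpleGraph V) (k : ℕ) (M : Finset (List V)) : Prop :=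
  IsKMatching G k M ∧ M.card = kMatchNum G k

/-- A `k`-independent set: a set of vertices whose induced subgraph contains no `k`-path. -/
def IsKIndepSet {V : Type*} (G : SimpleGraph V) (k : ℕ) (S : Finset V) : Prop :=
  ∀ l : List V, IsKPath G k l → ¬ (∀ v ∈ l, v ∈ S)

/-- The `k`-independence number `α_k(G)`. -/
noncomputable def kIndepNum {V : Type*} (G : SimpleGraph V) (k : ℕ) : ℕ :=
  sSup {n | ∃ S : Finset V, IsKIndepSet G k S ∧ S.card = n}

/-- A `k`-vertex cover: a set of vertices meeting every `k`-path of `G`. -/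
def IsKCover {V : Type*} (G : SimpleGraph V) (k : ℕ) (C : Finset V) : Prop :=
  ∀ l : List V, IsKPath G k l → ∃ v ∈ l, v ∈ C

/-- The `k`-vertex cover number `τ_k(G)`. -/
noncomputable def kCoverNum {V : Type*} (G : SimpleGraph V) (k : ℕ) : ℕ :=
  sInf {n | ∃ C : Finset V, IsKCover G k C ∧ C.card = n}

/-- A dissociation set: a set of vertices inducing a subgraph of maximum degree at most 1,
i.e. every vertex of `S` has at most one neighbour inside `S`. -/
def IsDissocSet {V : Type*} (G : SimpleGraph V) (S : Finset V) : Prop :=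
  ∀ v ∈ S, ∀ u ∈ S, ∀ w ∈ S, G.Adj v u → G.Adj v w → u = w

/-- The dissociation number `α₃(G)`. -/
noncomputable def dissNum {V : Type*} (G : SimpleGraph V) : ℕ :=
  sSup {n | ∃ S : Finset V, IsDissocSet G S ∧ S.card = n}

/-- A maximum dissociation set: a dissociation set of cardinality `α₃(G)`. -/
def IsMaxDissocSet {V : Type*} (G : SimpleGraph V) (S : Finset V) : Prop :=
  IsDissocSet G S ∧ S.card = dissNum G

/-- `uv` is an `α₃`-critical edge of `G`: deleting it increases the dissociation number. -/
def IsAlpha3Critical {V : Type*} (G : SimpleGraph V) (u v : V) : Prop :=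
  G.Adj u v ∧ dissNum G < dissNum (G.deleteEdges {s(u, v)})

/-- `uv` is a `μ₃`-critical edge of `G`: deleting it decreases the `3`-matching number. -/
def IsMu3Critical {V : Type*} (G : SimpleGraph V) (u v : V) : Prop :=
  G.Adj u v ∧ kMatchNum (G.deleteEdges {s(u, v)}) 3 < kMatchNum G 3

/-- An insulated `α₃`-critical edge: an `α₃`-critical edge sharing no end-vertex with any
other `α₃`-critical edge. -/
def IsInsulated {V : Type*} (G : SimpleGraph V) (u v : V) : Prop :=
  IsAlpha3Critical G u v ∧
    ∀ x y : V, IsAlpha3Critical G x y → s(x, y) ≠ s(u, v) →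
      x ≠ u ∧ x ≠ v ∧ y ≠ u ∧ y ≠ v

/-- A flexible vertex: one lying in some but not all maximum dissociation sets. -/
def IsFlexible {V : Type*} (G : SimpleGraph V) (v : V) : Prop :=
  (∃ S : Finset V, IsMaxDissocSet G S ∧ v ∈ S) ∧
    (∃ S : Finset V, IsMaxDissocSet G S ∧ v ∉ S)

/-- The set of static-included vertices: vertices lying in every maximum dissociation set. -/
def staticIncluded {V : Type*} (G : SimpleGraph V) : Set V :=
  {v | ∀ S : Finset V, IsMaxDissocSet G S → v ∈ S}

/-- The set of static-excluded vertices: vertices lying in no maximum dissociation set. -/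
def staticExcluded {V : Type*} (G : SimpleGraph V) : Set V :=
  {v | ∀ S : Finset V, IsMaxDissocSet G S → v ∉ S}

/-- The (unordered) edge `uv` occurs as an edge of the path recorded by the list `l`. -/
def EdgeInList {V : Type*} (l : List V) (u v : V) : Prop :=
  ∃ p ∈ l.zip l.tail, p = (u, v) ∨ p = (v, u)

/-!
The complements of the dissociation sets are the sets meeting all 3-paths, so maximum dissociation
sets correspond to minimum hitting sets of the family of 3-paths. Connected vertex sets of a forest
have the König property: among finitely many of them, one whose highest vertex `t` is lowest has
`t` in common with every other member it meets, so picking such sets greedily yields disjoint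
members `p₁, …, pₘ` together with a hitting set of size `m`. Hence every minimum hitting set
consists of exactly one vertex from each `pᵢ`. If `cᵢ` vertices of `pᵢ` are flexible, then
`max 1 cᵢ` choices are possible in `pᵢ`, and `∏ max 1 cᵢ` is at most the largest product of
positive integers with sum `∑ cᵢ`.
-/

section MaxPartProd

/-- The largest product of positive integers with sum `n` (OEIS A000792), which bounds the number
of maximum dissociation sets of a forest with `n` flexible vertices. It is computed by splitting
off parts equal to `3`, which is optimal from `n = 5` on. -/
def maxPartProd : ℕ → ℕ
  | 0 => 1
  | 1 => 1
  | 2 => 2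
  | 3 => 3
  | 4 => 4
  | n + 5 => 3 * maxPartProd (n + 2)

theorem one_le_maxPartProd (n : ℕ) : 1 ≤ maxPartProd n := by
  fun_induction maxPartProd n <;> lia

theorem le_maxPartProd (n : ℕ) : n ≤ maxPartProd n := by
  fun_induction maxPartProd n <;> lia

theorem maxPartProd_le_succ (n : ℕ) : maxPartProd n ≤ maxPartProd (n + 1) := by
  fun_induction maxPartProd n with
  | case6 n ih => exact Nat.mul_le_mul_left 3 ih
  | _ => decide

theorem maxPartProd_mono : Monotone maxPartProd :=
  monotone_nat_of_le_succ maxPartProd_le_succ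

theorem two_mul_maxPartProd_le (n : ℕ) : 2 * maxPartProd n ≤ maxPartProd (n + 2) := by
  fun_induction maxPartProd n with
  | case6 n ih =>
    rw [Nat.mul_left_comm]
    exact Nat.mul_le_mul_left 3 ih
  | _ => decide

theorem three_mul_maxPartProd_le (n : ℕ) : 3 * maxPartProd n ≤ maxPartProd (n + 3) :=
  match n with
  | 0 | 1 => by decide
  | _ + 2 => le_rfl

theorem maxPartProd_mul_le (a b : ℕ) :
    maxPartProd a * maxPartProd b ≤ maxPartProd (a + b) := by
  rw [Nat.add_comm]
  fun_induction maxPartProd a with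
  | case1 => exact (Nat.one_mul _).le
  | case2 => exact (Nat.one_mul _).trans_le (maxPartProd_le_succ b)
  | case3 => exact two_mul_maxPartProd_le b
  | case4 => exact three_mul_maxPartProd_le b
  | case5 =>
    calc 4 * maxPartProd b = 2 * (2 * maxPartProd b) := by ring
      _ ≤ 2 * maxPartProd (b + 2) := Nat.mul_le_mul_left 2 (two_mul_maxPartProd_le b)
      _ ≤ maxPartProd (b + 4) := two_mul_maxPartProd_le (b + 2)
  | case6 a ih =>
    calc 3 * maxPartProd (a + 2) * maxPartProd b
        = 3 * (maxPartProd (a + 2) * maxPartProd b) := Nat.mul_assoc ..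
      _ ≤ 3 * maxPartProd (b + (a + 2)) := Nat.mul_le_mul_left 3 ih
      _ ≤ maxPartProd (b + (a + 5)) := three_mul_maxPartProd_le _

theorem prod_max_one_le_maxPartProd {ι : Type*} (s : Finset ι) (c : ι → ℕ) :
    ∏ i ∈ s, max 1 (c i) ≤ maxPartProd (∑ i ∈ s, c i) := by
  classical
  induction s using Finset.induction_on with
  | empty => exact le_rfl
  | insert i s hi ih =>
    rw [Finset.prod_insert hi, Finset.sum_insert hi]
    have h : max 1 (c i) ≤ maxPartProd (c i) :=
      max_le (one_le_maxPartProd _) (le_maxPartProd _)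
    exact (Nat.mul_le_mul h ih).trans (maxPartProd_mul_le _ _)

theorem maxPartProd_add_three {n : ℕ} (hn : 2 ≤ n) :
    maxPartProd (n + 3) = 3 * maxPartProd n := by
  obtain ⟨n, rfl⟩ := Nat.exists_eq_add_of_le' hn
  rfl

theorem maxPartProd_three_mul (t : ℕ) : maxPartProd (3 * t) = 3 ^ t := by
  induction t with
  | zero => rfl
  | succ t ih =>
    rcases t with _ | t
    · rfl
    · rw [Nat.mul_succ, maxPartProd_add_three (by lia), ih, ← pow_succ']

theorem maxPartProd_three_mul_add_two (t : ℕ) : maxPartProd (3 * t + 2) = 3 ^ t * 2 := by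
  induction t with
  | zero => rfl
  | succ t ih =>
    rw [Nat.mul_succ, Nat.add_right_comm, maxPartProd_add_three (by lia), ih, ← Nat.mul_assoc,
      ← pow_succ']

theorem maxPartProd_three_mul_add_four (t : ℕ) : maxPartProd (3 * t + 4) = 3 ^ t * 2 ^ 2 := by
  induction t with
  | zero => rfl
  | succ t ih =>
    rw [Nat.mul_succ, Nat.add_right_comm, maxPartProd_add_three (by lia), ih, ← Nat.mul_assoc,
      ← pow_succ']

end MaxPartProd

section Transversals

variable {V : Type*} [DecidableEq V] {M : Finset (Finset V)} {C p : Finset V}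

/-- `C` is a transversal of the family `M`: it has exactly one element in each member of `M`, and
no element outside the members of `M`. -/
def IsTransversal (M : Finset (Finset V)) (C : Finset V) : Prop :=
  (∀ p ∈ M, (p ∩ C).card = 1) ∧ C ⊆ M.biUnion id

/-- The elements lying in some but not all members of `D`. When `D` consists of the complements of
the maximum dissociation sets of a graph, these are its flexible vertices. -/
def flexibleElems (D : Finset (Finset V)) : Finset V :=
  {v ∈ D.biUnion id | ∃ E ∈ D, v ∉ E}

theorem mem_flexibleElems {D : Finset (Finset V)} {v : V} :
    v ∈ flexibleElems D ↔ (∃ E ∈ D, v ∈ E) ∧ ∃ E ∈ D, v ∉ E := by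
  simp only [flexibleElems, Finset.mem_filter, Finset.mem_biUnion, id]

theorem card_biUnion_inter (hM : (M : Set (Finset V)).PairwiseDisjoint id) (C : Finset V) :
    (M.biUnion (· ∩ C)).card = ∑ p ∈ M, (p ∩ C).card :=
  Finset.card_biUnion (hM.mono fun _ ↦ Finset.inter_subset_left)

theorem sum_card_inter_le_card (hM : (M : Set (Finset V)).PairwiseDisjoint id) (C : Finset V) :
    ∑ p ∈ M, (p ∩ C).card ≤ C.card := by
  rw [← card_biUnion_inter hM]
  exact Finset.card_le_card (Finset.biUnion_subset.2 fun _ _ ↦ Finset.inter_subset_right)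

theorem isTransversal_of_card_le (hM : (M : Set (Finset V)).PairwiseDisjoint id)
    (hit : ∀ p ∈ M, ¬Disjoint p C) (hcard : C.card ≤ M.card) : IsTransversal M C := by
  have one_le : ∀ p ∈ M, 1 ≤ (p ∩ C).card := fun p hp ↦
    Finset.card_pos.2 (Finset.not_disjoint_iff_nonempty_inter.1 (hit p hp))
  have card_le_sum : M.card ≤ ∑ p ∈ M, (p ∩ C).card := by
    simpa using Finset.card_nsmul_le_sum M _ 1 one_le
  have sum_le := sum_card_inter_le_card hM C
  refine ⟨fun p hp ↦ ?_, ?_⟩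
  · have sum_eq : ∑ _p ∈ M, 1 = ∑ p ∈ M, (p ∩ C).card := by
      rw [← Finset.card_eq_sum_ones]
      lia
    exact ((Finset.sum_eq_sum_iff_of_le one_le).1 sum_eq p hp).symm
  · have biUnion_eq : M.biUnion (· ∩ C) = C := by
      refine Finset.eq_of_subset_of_card_le
        (Finset.biUnion_subset.2 fun _ _ ↦ Finset.inter_subset_right) ?_
      rw [card_biUnion_inter hM]
      lia
    rw [← biUnion_eq]
    exact Finset.biUnion_mono fun _ _ ↦ Finset.inter_subset_left

theorem card_le_prod_card_image_inter {D : Finset (Finset V)} (hD : ∀ E ∈ D, E ⊆ M.biUnion id) :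
    D.card ≤ ∏ p ∈ M, (D.image (p ∩ ·)).card := by
  have subset_of_traces_eq : ∀ E ∈ D, ∀ E', (∀ p ∈ M, p ∩ E = p ∩ E') → E ⊆ E' := by
    intro E hE E' h x hx
    obtain ⟨p, hp, hxp⟩ := Finset.mem_biUnion.1 (hD E hE hx)
    exact Finset.mem_of_mem_inter_right (h p hp ▸ Finset.mem_inter.2 ⟨hxp, hx⟩)
  rw [← Finset.card_pi]
  refine Finset.card_le_card_of_injOn (fun E p _ ↦ p ∩ E)
    (fun E hE ↦ Finset.mem_pi.2 fun p _ ↦ Finset.mem_image_of_mem (p ∩ ·) hE) ?_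
  intro E hE E' hE' h
  have traces_eq : ∀ p ∈ M, p ∩ E = p ∩ E' := fun p hp ↦ congrFun (congrFun h p) hp
  exact (subset_of_traces_eq E hE E' traces_eq).antisymm
    (subset_of_traces_eq E' hE' E fun p hp ↦ (traces_eq p hp).symm)

theorem card_image_inter_le_max_one {D : Finset (Finset V)}
    (hD : ∀ E ∈ D, (p ∩ E).card = 1) :
    (D.image (p ∩ ·)).card ≤ max 1 (p ∩ flexibleElems D).card := by
  refine le_max_iff.2 <| (le_or_gt _ 1).imp_right fun one_lt ↦ ?_
  rw [← Nat.choose_one_right (p ∩ flexibleElems D).card, ← Finset.card_powersetCard]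
  refine Finset.card_le_card <| Finset.image_subset_iff.2 fun E hE ↦
    Finset.mem_powersetCard.2 ⟨fun v hv ↦ ?_, hD E hE⟩
  obtain ⟨hvp, hvE⟩ := Finset.mem_inter.1 hv
  obtain ⟨_, himage, hne⟩ := Finset.exists_mem_ne one_lt (p ∩ E)
  obtain ⟨E', hE', rfl⟩ := Finset.mem_image.1 himage
  have hvE' : v ∉ E' := by
    intro hvE'
    obtain ⟨a, ha⟩ := Finset.card_eq_one.1 (hD E hE)
    obtain ⟨b, hb⟩ := Finset.card_eq_one.1 (hD E' hE')
    have hva : v = a := Finset.mem_singleton.1 (ha ▸ hv)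
    have hvb : v = b := Finset.mem_singleton.1 (hb ▸ Finset.mem_inter.2 ⟨hvp, hvE'⟩)
    exact hne (by rw [ha, hb, ← hva, ← hvb])
  exact Finset.mem_inter.2 ⟨hvp, mem_flexibleElems.2 ⟨⟨E, hE, hvE⟩, E', hE', hvE'⟩⟩

theorem card_le_maxPartProd_of_isTransversal (hM : (M : Set (Finset V)).PairwiseDisjoint id)
    {D : Finset (Finset V)} (hD : ∀ E ∈ D, IsTransversal M E) :
    D.card ≤ maxPartProd (flexibleElems D).card :=
  calc D.card ≤ ∏ p ∈ M, (D.image (p ∩ ·)).card :=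
        card_le_prod_card_image_inter fun E hE ↦ (hD E hE).2
    _ ≤ ∏ p ∈ M, max 1 (p ∩ flexibleElems D).card :=
        Finset.prod_le_prod' fun p hp ↦ card_image_inter_le_max_one fun E hE ↦ (hD E hE).1 p hp
    _ ≤ maxPartProd (∑ p ∈ M, (p ∩ flexibleElems D).card) := prod_max_one_le_maxPartProd _ _
    _ ≤ maxPartProd (flexibleElems D).card := maxPartProd_mono (sum_card_inter_le_card hM _)

end Transversals

section HittingSets

variable {V : Type*} {𝓕 : Finset (Finset V)}

/-- `C` is a hitting set of the family `𝓕`: it meets every member of `𝓕`. -/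
def IsHittingSet (𝓕 : Finset (Finset V)) (C : Finset V) : Prop :=
  ∀ p ∈ 𝓕, ¬Disjoint p C

/-- `C` is a hitting set of `𝓕` of minimum cardinality. -/
def IsMinHittingSet (𝓕 : Finset (Finset V)) (C : Finset V) : Prop :=
  IsHittingSet 𝓕 C ∧ ∀ C', IsHittingSet 𝓕 C' → C.card ≤ C'.card

theorem exists_pairwiseDisjoint_isHittingSet_card_le
    (h : ∀ 𝓖 ⊆ 𝓕, 𝓖.Nonempty → ∃ p ∈ 𝓖, ∃ t ∈ p, ∀ q ∈ 𝓖, ¬Disjoint p q → t ∈ q) :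
    ∃ M ⊆ 𝓕, (M : Set (Finset V)).PairwiseDisjoint id ∧
      ∃ C, IsHittingSet 𝓕 C ∧ C.card ≤ M.card := by
  classical
  induction 𝓕 using Finset.strongInduction with
  | _ 𝓕 ih =>
    rcases 𝓕.eq_empty_or_nonempty with rfl | hne
    · exact ⟨∅, subset_rfl, by simp, ∅, by simp [IsHittingSet], le_rfl⟩
    obtain ⟨p, hp, t, htp, ht⟩ := h 𝓕 subset_rfl hne
    have hsub : {q ∈ 𝓕 | t ∉ q} ⊂ 𝓕 := Finset.filter_ssubset.2 ⟨p, hp, not_not.2 htp⟩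
    obtain ⟨M, hM, hdisj, C, hC, hcard⟩ := ih _ hsub fun 𝓖 h𝓖 ↦ h 𝓖 (h𝓖.trans hsub.subset)
    have disjoint_of_mem : ∀ q ∈ M, Disjoint p q := fun q hq ↦ by
      obtain ⟨hq, htq⟩ := Finset.mem_filter.1 (hM hq)
      exact not_not.1 fun hpq ↦ htq (ht q hq hpq)
    have hpM : p ∉ M := fun hpM ↦ (Finset.mem_filter.1 (hM hpM)).2 htp
    refine ⟨insert p M, Finset.insert_subset hp (hM.trans hsub.subset), ?_, insert t C, ?_, ?_⟩
    · rw [Finset.coe_insert]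
      exact hdisj.insert fun q hq _ ↦ disjoint_of_mem q hq
    · intro q hq
      rw [Finset.disjoint_insert_right, not_and_or, not_not]
      exact (em (t ∈ q)).imp_right fun htq ↦ hC q (Finset.mem_filter.2 ⟨hq, htq⟩)
    · rw [Finset.card_insert_of_notMem hpM]
      exact (Finset.card_insert_le t C).trans (Nat.succ_le_succ hcard)

end HittingSets

section Forests

variable {V : Type*} {G : SimpleGraph V} {depth : V → ℕ} {parent : V → V}

/-- `depth` and `parent` describe a choice of roots in the forest `G`: of any two adjacent vertices,
one is the parent of the other and has smaller depth. The parent of a root is arbitrary. -/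
def IsRooting (G : SimpleGraph V) (depth : V → ℕ) (parent : V → V) : Prop :=
  ∀ ⦃u v⦄, G.Adj u v →
    (parent u = v ∧ depth v < depth u) ∨ (parent v = u ∧ depth u < depth v)

theorem exists_isRooting_of_isTree (hG : G.IsTree) :
    ∃ depth parent, IsRooting G depth parent := by
  obtain ⟨r⟩ := hG.connected.nonempty
  choose P hP using fun v ↦ (hG.existsUnique_path r v).exists
  have parent_of_mem_support : ∀ u v, G.Adj u v → v ∈ (P u).support →
      (P u).penultimate = v ∧ (P v).length < (P u).length := by
    intro u v huv hv
    rw [hG.isAcyclic.path_concat (hP v) (hP u) huv.symm hv]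
    exact ⟨Walk.penultimate_concat .., by simp⟩
  refine ⟨fun v ↦ (P v).length, fun v ↦ (P v).penultimate, fun u v huv ↦ ?_⟩
  by_cases hv : v ∈ (P u).support
  · exact .inl (parent_of_mem_support u v huv hv)
  · have hu : u ∈ (P v).support :=
      hG.isAcyclic.mem_support_of_ne_mem_support_of_adj_of_isPath (hP v) (hP u) huv.symm hv
    exact .inr (parent_of_mem_support v u huv.symm hu)

theorem exists_isRooting_of_isAcyclic (hG : G.IsAcyclic) :
    ∃ depth parent, IsRooting G depth parent := by
  cases isEmpty_or_nonempty V
  · exact ⟨isEmptyElim, isEmptyElim, fun u ↦ isEmptyElim u⟩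
  · obtain ⟨T, hGT, -, hT⟩ := connected_top.exists_isTree_le_of_le_of_isAcyclic le_top hG
    obtain ⟨depth, parent, h⟩ := exists_isRooting_of_isTree hT
    exact ⟨depth, parent, fun u v huv ↦ h (hGT huv)⟩

namespace IsRooting

theorem depth_lt_of_isPath_cons (h : IsRooting G depth parent) {u v w : V} (huv : G.Adj u v)
    (p : G.Walk v w) (hp : (p.cons huv).IsPath) (hlt : depth u < depth v) :
    depth u < depth w := by
  induction p generalizing u with
  | nil => exact hlt
  | @cons v x w hvx p ih =>
    obtain ⟨hp, hu⟩ := (Walk.cons_isPath_iff ..).1 hp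
    have hparent : parent v = u := by
      rcases h huv with ⟨-, hlt'⟩ | ⟨hv, -⟩
      · exact absurd hlt' hlt.not_gt
      · exact hv
    rcases h hvx with ⟨hx, -⟩ | ⟨-, hlt'⟩
    · have hux : u = x := hparent.symm.trans hx
      rw [Walk.support_cons, hux] at hu
      exact absurd (List.mem_cons_of_mem _ p.start_mem_support) hu
    · exact hlt.trans (ih hvx hp hlt')

theorem parent_mem_of_preconnected (h : IsRooting G depth parent) {s : Set V}
    (hs : (G.induce s).Preconnected) {x t : V} (hx : x ∈ s) (ht : t ∈ s) (hne : x ≠ t)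
    (hle : depth t ≤ depth x) : parent x ∈ s ∧ depth (parent x) < depth x := by
  obtain ⟨p, hp⟩ := (hs ⟨x, hx⟩ ⟨t, ht⟩).exists_isPath
  cases p with
  | nil => exact absurd rfl hne
  | @cons _ y _ hxy p =>
    have hpath : ((p.cons hxy).map (Embedding.induce (G := G) s).toHom).IsPath :=
      hp.map (Embedding.induce (G := G) s).injective
    rcases h hxy with ⟨hy, hlt⟩ | ⟨-, hlt⟩
    · exact hy ▸ ⟨y.2, hlt⟩
    · exact absurd (h.depth_lt_of_isPath_cons hxy _ hpath hlt) hle.not_gt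

theorem mem_of_not_disjoint (h : IsRooting G depth parent) {s s' : Set V}
    (hs : (G.induce s).Preconnected) (hs' : (G.induce s').Preconnected) {t t' : V} (ht : t ∈ s)
    (htop : ∀ x ∈ s, depth t ≤ depth x) (ht' : t' ∈ s') (hle : depth t' ≤ depth t)
    (hmeet : ¬Disjoint s s') : t ∈ s' := by
  obtain ⟨x, hx, hx'⟩ := Set.not_disjoint_iff.1 hmeet
  induction hd : depth x using Nat.strong_induction_on generalizing x with
  | _ d ih =>
    by_cases hxt : x = t
    · exact hxt ▸ hx'
    obtain ⟨hparent, hlt⟩ := h.parent_mem_of_preconnected hs hx ht hxt (htop x hx)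
    have ht'x : depth t' < depth x := hle.trans_lt ((htop _ hparent).trans_lt hlt)
    have hxt' : x ≠ t' := fun hxt' ↦ ht'x.ne' (congrArg depth hxt')
    have hparent' := (h.parent_mem_of_preconnected hs' hx' ht' hxt' ht'x.le).1
    exact ih _ (hd ▸ hlt) (parent x) hparent hparent' rfl

theorem exists_common_mem (h : IsRooting G depth parent) {𝓕 : Finset (Finset V)}
    (hconn : ∀ p ∈ 𝓕, (G.induce (p : Set V)).Connected) (hne : 𝓕.Nonempty) :
    ∃ p ∈ 𝓕, ∃ t ∈ p, ∀ q ∈ 𝓕, ¬Disjoint p q → t ∈ q := by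
  have exists_top : ∀ p ∈ 𝓕, ∃ t ∈ p, depth t = sInf (depth '' p) := fun p hp ↦
    Nat.sInf_mem ((Set.nonempty_coe_sort.1 (hconn p hp).nonempty).image depth)
  obtain ⟨p, hp, hmax⟩ := 𝓕.exists_max_image (fun p ↦ sInf (depth '' p)) hne
  obtain ⟨t, htp, ht⟩ := exists_top p hp
  refine ⟨p, hp, t, htp, fun q hq hpq ↦ ?_⟩
  obtain ⟨t', htq, ht'⟩ := exists_top q hq
  exact h.mem_of_not_disjoint (hconn p hp).preconnected (hconn q hq).preconnected htp
    (fun x hx ↦ ht.trans_le (Nat.sInf_le ⟨x, hx, rfl⟩)) htq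
    (ht'.trans_le ((hmax q hq).trans_eq ht.symm)) (mt Finset.disjoint_coe.1 hpq)

end IsRooting

theorem card_le_maxPartProd_of_isMinHittingSet [DecidableEq V] (hG : G.IsAcyclic)
    {𝓕 D : Finset (Finset V)} (hconn : ∀ p ∈ 𝓕, (G.induce (p : Set V)).Connected)
    (hD : ∀ E ∈ D, IsMinHittingSet 𝓕 E) : D.card ≤ maxPartProd (flexibleElems D).card := by
  obtain ⟨depth, parent, h⟩ := exists_isRooting_of_isAcyclic hG
  obtain ⟨M, hM, hdisj, C, hC, hcard⟩ := exists_pairwiseDisjoint_isHittingSet_card_le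
    fun 𝓖 h𝓖 ↦ h.exists_common_mem fun p hp ↦ hconn p (h𝓖 hp)
  refine card_le_maxPartProd_of_isTransversal hdisj fun E hE ↦ ?_
  exact isTransversal_of_card_le hdisj (fun p hp ↦ (hD E hE).1 p (hM hp))
    (((hD E hE).2 C hC).trans hcard)

end Forests

section Dissociation

variable {V : Type*} {G : SimpleGraph V} {S : Finset V}

theorem IsDissocSet.card_le_dissNum [Finite V] (hS : IsDissocSet G S) : S.card ≤ dissNum G := by
  cases nonempty_fintype V
  refine le_csSup ⟨Fintype.card V, ?_⟩ ⟨S, hS, rfl⟩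
  rintro _ ⟨S, -, rfl⟩
  exact S.card_le_univ

variable [Fintype V] [DecidableEq V] [DecidableRel G.Adj]

/-- The vertex sets of the (not necessarily induced) 3-paths of `G`; the dissociation sets are the
sets containing none of them. -/
def threePaths (G : SimpleGraph V) [DecidableRel G.Adj] : Finset (Finset V) :=
  {p | ∃ a b c, a ≠ c ∧ G.Adj b a ∧ G.Adj b c ∧ p = {a, b, c}}

theorem mem_threePaths {p : Finset V} :
    p ∈ threePaths G ↔ ∃ a b c, a ≠ c ∧ G.Adj b a ∧ G.Adj b c ∧ p = {a, b, c} := by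
  simp only [threePaths, Finset.mem_filter_univ]

theorem connected_induce_of_mem_threePaths {p : Finset V} (hp : p ∈ threePaths G) :
    (G.induce (p : Set V)).Connected := by
  obtain ⟨a, b, c, -, hba, hbc, rfl⟩ := mem_threePaths.1 hp
  have hunion : (({a, b, c} : Finset V) : Set V) = {b, a} ∪ {b, c} := by
    ext x
    simp only [Finset.coe_insert, Finset.coe_singleton, Set.mem_insert_iff, Set.mem_union,
      Set.mem_singleton_iff]
    tauto
  rw [hunion]
  exact induce_union_connected (induce_pair_connected_of_adj hba).preconnected
    (induce_pair_connected_of_adj hbc).preconnected ⟨b, by simp⟩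

theorem isDissocSet_iff_isHittingSet_compl :
    IsDissocSet G S ↔ IsHittingSet (threePaths G) Sᶜ := by
  simp only [IsHittingSet, disjoint_compl_right_iff, mem_threePaths]
  constructor
  · rintro hS _ ⟨a, b, c, hac, hba, hbc, rfl⟩ hsub
    simp only [Finset.insert_subset_iff, Finset.singleton_subset_iff] at hsub
    exact hac (hS b hsub.2.1 a hsub.1 c hsub.2.2 hba hbc)
  · intro hS b hb a ha c hc hba hbc
    by_contra hac
    refine hS _ ⟨a, b, c, hac, hba, hbc, rfl⟩ ?_
    simp only [Finset.insert_subset_iff, Finset.singleton_subset_iff]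
    exact ⟨ha, hb, hc⟩

theorem IsMaxDissocSet.isMinHittingSet_compl (hS : IsMaxDissocSet G S) :
    IsMinHittingSet (threePaths G) Sᶜ := by
  refine ⟨isDissocSet_iff_isHittingSet_compl.1 hS.1, fun C hC ↦ ?_⟩
  have hCS : Cᶜ.card ≤ S.card :=
    hS.2 ▸ (isDissocSet_iff_isHittingSet_compl.2 (by rwa [compl_compl])).card_le_dissNum
  rw [Finset.card_compl] at hCS ⊢
  lia

end Dissociation

theorem ncard_isMaxDissocSet_le_maxPartProd {V : Type*} [Finite V] {G : SimpleGraph V}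
    (hG : G.IsAcyclic) :
    {S : Finset V | IsMaxDissocSet G S}.ncard ≤ maxPartProd {v : V | IsFlexible G v}.ncard := by
  classical
  cases nonempty_fintype V
  let D : Finset (Finset V) := ({S | IsMaxDissocSet G S} : Finset (Finset V)).image compl
  have card_D : D.card = {S : Finset V | IsMaxDissocSet G S}.ncard := by
    rw [Finset.card_image_of_injective _ compl_injective, ← Set.ncard_coe_finset,
      Finset.coe_filter_univ]
  have flexible_D : (flexibleElems D : Set V) = {v | IsFlexible G v} := by
    ext v
    rw [Finset.mem_coe, mem_flexibleElems, and_comm]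
    simp only [D, Finset.exists_mem_image, Finset.mem_filter_univ, Finset.mem_compl, not_not]
    rfl
  rw [← card_D, ← flexible_D, Set.ncard_coe_finset]
  refine card_le_maxPartProd_of_isMinHittingSet hG
    (fun p ↦ connected_induce_of_mem_threePaths) (Finset.forall_mem_image.2 fun S hS ↦ ?_)
  exact ((Finset.mem_filter_univ S).1 hS).isMinHittingSet_compl

theorem tree_numMaxDissoc_le_of_flexible_count_general {V : Type*} [Finite V]
    (G : SimpleGraph V) (hG : G.IsAcyclic) (k : ℕ)
    (hk : {v : V | IsFlexible G v}.ncard = k) :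
    (∀ t : ℕ, k = 3 * t →
      {S : Finset V | IsMaxDissocSet G S}.ncard ≤ 3 ^ t) ∧
    (∀ t : ℕ, k = 3 * t + 1 →
      {S : Finset V | IsMaxDissocSet G S}.ncard ≤ 3 ^ (t - 1) * 2 ^ 2) ∧
    (∀ t : ℕ, k = 3 * t + 2 →
      {S : Finset V | IsMaxDissocSet G S}.ncard ≤ 3 ^ t * 2) := by
  have hle := ncard_isMaxDissocSet_le_maxPartProd hG
  rw [hk] at hle
  refine ⟨?_, ?_, ?_⟩
  · rintro t rfl
    exact hle.trans_eq (maxPartProd_three_mul t)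
  · rintro (_ | t) rfl
    · exact hle.trans (by decide)
    · exact hle.trans_eq (maxPartProd_three_mul_add_four t)
  · rintro t rfl
    exact hle.trans_eq (maxPartProd_three_mul_add_two t)

/-- Let `T` be a tree with exactly `k` flexible vertices.  If `k = 3t` then `T` has at
most `3^t` maximum dissociation sets; if `k = 3t + 1` then at most `3^(t-1) * 2^2`; and
if `k = 3t + 2` then at most `3^t * 2`. -/
theorem tree_numMaxDissoc_le_of_flexible_count {V : Type*} [Fintype V] [DecidableEq V]
    (T : SimpleGraph V) (hT : T.IsTree) (k : ℕ)
    (hk : {v : V | IsFlexible T v}.ncard = k) :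
    (∀ t : ℕ, k = 3 * t →
      {S : Finset V | IsMaxDissocSet T S}.ncard ≤ 3 ^ t) ∧
    (∀ t : ℕ, k = 3 * t + 1 →
      {S : Finset V | IsMaxDissocSet T S}.ncard ≤ 3 ^ (t - 1) * 2 ^ 2) ∧
    (∀ t : ℕ, k = 3 * t + 2 →
      {S : Finset V | IsMaxDissocSet T S}.ncard ≤ 3 ^ t * 2) :=
  tree_numMaxDissoc_le_of_flexible_count_general T hT.isAcyclic k hk
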